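/- arXiv:1406.4003 — 3 statements merged into one kernel-verified Lean document; each statement's English description precedes it below -/
import Mathlib

section
/- Let ρ ∈ 𝓤^inv and let f = g + φ ∈ WPAA(ρ), where g ∈ SAA and φ ∈ SPAA₀(ρ). Then the closure (in L²(P,H)) of the range {f(t) : t ∈ ℝ} contains the range {g(t) : t ∈ ℝ}; equivalently, for every t₀ ∈ ℝ and ε > 0 there exists t ∈ ℝ with (E‖g(t₀) − f(t)‖²)^{1/2} < ε. -/
open MeasureTheory Filter Set Topology

noncomputable section

section Defs

variable {E : Type*} [NormedAddCommGroup E]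

/-- Stochastic continuity: `E‖x(t) − x(s)‖² → 0` as `t → s` (norms taken in `L²(P,H)`). -/
def StochCont (x : ℝ → E) : Prop :=
  ∀ s : ℝ, Tendsto (fun t => ‖x t - x s‖ ^ 2) (𝓝 s) (𝓝 0)

/-- Stochastic boundedness: `sup_t E‖x(t)‖² < ∞`. -/
def StochBdd (x : ℝ → E) : Prop := ∃ M : ℝ, ∀ t : ℝ, ‖x t‖ ^ 2 ≤ M

/-- Square-mean almost automorphy (SAA). -/
def SAA (x : ℝ → E) : Prop :=
  StochCont x ∧
  ∀ s' : ℕ → ℝ, ∃ φ : ℕ → ℕ, StrictMono φ ∧ ∃ y : ℝ → E,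
    (∀ t : ℝ, Tendsto (fun n => ‖x (t + s' (φ n)) - y t‖ ^ 2) atTop (𝓝 0)) ∧
    (∀ t : ℝ, Tendsto (fun n => ‖y (t - s' (φ n)) - x t‖ ^ 2) atTop (𝓝 0))

/-- `μ(T,ρ) = ∫_{−T}^{T} ρ(t) dt`. -/
def muW (ρ : ℝ → ℝ) (T : ℝ) : ℝ := ∫ t in (-T)..T, ρ t

/-- `ρ ∈ 𝓤_∞`: positive, locally integrable, `μ(T,ρ) → ∞`. -/
def UInfty (ρ : ℝ → ℝ) : Prop :=
  (∀ t, 0 < ρ t) ∧ MeasureTheory.LocallyIntegrable ρ ∧ Tendsto (muW ρ) atTop atTop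

/-- The ergodic-zero class `SPAA₀(ρ)`. Note `(E‖x(t)‖²)^{1/2} = ‖x t‖` in `L²(P,H)`. -/
def SPAA0 (ρ : ℝ → ℝ) (x : ℝ → E) : Prop :=
  StochCont x ∧ StochBdd x ∧
  Tendsto (fun T => (muW ρ T)⁻¹ * ∫ t in (-T)..T, ‖x t‖ * ρ t) atTop (𝓝 0)

/-- `ρ ∈ 𝓤^inv`: `ρ ∈ 𝓤_∞` and `SPAA₀(ρ)` (for `F`-valued processes) is translation invariant. -/
def UInvSp (F : Type*) [NormedAddCommGroup F] (ρ : ℝ → ℝ) : Prop :=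
  UInfty ρ ∧ ∀ x : ℝ → F, SPAA0 ρ x → ∀ τ : ℝ, SPAA0 ρ fun t => x (t + τ)

/-- Square-mean weighted pseudo almost automorphy `WPAA(ρ)`. -/
def WPAA (ρ : ℝ → ℝ) (f : ℝ → E) : Prop :=
  ∃ g h : ℝ → E, SAA g ∧ SPAA0 ρ h ∧ ∀ t, f t = g t + h t

/-- `L²_loc`: square integrability (of the second moment) on compact sets. -/
def L2loc (x : ℝ → E) : Prop :=
  ∀ K : Set ℝ, IsCompact K → IntegrableOn (fun s => ‖x s‖ ^ 2) K

/-- `S²`-almost automorphy (`AS²`). -/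
def AS2 (x : ℝ → E) : Prop :=
  L2loc x ∧
  ∀ s' : ℕ → ℝ, ∃ φ : ℕ → ℕ, StrictMono φ ∧ ∃ y : ℝ → E, L2loc y ∧
    (∀ t : ℝ, Tendsto (fun n => ∫ s in t..(t + 1), ‖x (s + s' (φ n)) - y s‖ ^ 2) atTop (𝓝 0)) ∧
    (∀ t : ℝ, Tendsto (fun n => ∫ s in t..(t + 1), ‖y (s - s' (φ n)) - x s‖ ^ 2) atTop (𝓝 0))

/-- `BS²`: Stepanov boundedness. -/
def BS2 (x : ℝ → E) : Prop :=
  L2loc x ∧ ∃ M : ℝ, ∀ t : ℝ, (∫ s in t..(t + 1), ‖x s‖ ^ 2) ≤ M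

/-- `h^b ∈ SPAA₀^{S²}(ρ)`. -/
def SPAA0S2 (ρ : ℝ → ℝ) (h : ℝ → E) : Prop :=
  Tendsto (fun T => (muW ρ T)⁻¹ *
    ∫ t in (-T)..T, Real.sqrt (∫ s in t..(t + 1), ‖h s‖ ^ 2) * ρ t) atTop (𝓝 0)

/-- `S²`-weighted pseudo almost automorphy `WPAAS²(ρ)`. -/
def WPAAS2 (ρ : ℝ → ℝ) (f : ℝ → E) : Prop :=
  BS2 f ∧ ∃ g h : ℝ → E, AS2 g ∧ SPAA0S2 ρ h ∧ ∀ t, f t = g t + h t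

/-- `ρ₁ ∼ ρ₂`: the quotient `ρ₁/ρ₂` is bounded with positive infimum. -/
def equivW (ρ₁ ρ₂ : ℝ → ℝ) : Prop :=
  (∃ C : ℝ, ∀ t, ρ₁ t / ρ₂ t ≤ C) ∧ (∃ c > 0, ∀ t, c ≤ ρ₁ t / ρ₂ t)

/-- `ρ ∈ 𝓤_T`: `ρ ∈ 𝓤_∞` and `ρ ∼ ρ(· + s)` for every `s`. -/
def UT (ρ : ℝ → ℝ) : Prop :=
  UInfty ρ ∧ ∀ s : ℝ, equivW ρ fun t => ρ (t + s)

/-- `f(·,x) ∈ L²_loc` for each `x`. -/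
def L2locF (f : ℝ → E → E) : Prop := ∀ x : E, L2loc fun t => f t x

/-- Two-variable `S²`-almost automorphy `AS²(ℝ×L²(P,H))`. -/
def AS2F (f : ℝ → E → E) : Prop :=
  L2locF f ∧
  ∀ s' : ℕ → ℝ, ∃ φ : ℕ → ℕ, StrictMono φ ∧ ∃ g : ℝ → E → E, L2locF g ∧
    (∀ t : ℝ, ∀ x : E,
      Tendsto (fun n => ∫ s in t..(t + 1), ‖f (s + s' (φ n)) x - g s x‖ ^ 2) atTop (𝓝 0)) ∧
    (∀ t : ℝ, ∀ x : E,
      Tendsto (fun n => ∫ s in t..(t + 1), ‖g (s - s' (φ n)) x - f s x‖ ^ 2) atTop (𝓝 0))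

/-- Uniform stochastic continuity on bounded subsets, uniformly in `t`. -/
def UnifStochCont (f : ℝ → E → E) : Prop :=
  ∀ K' : Set E, Bornology.IsBounded K' → ∀ ε > 0, ∃ δ > 0,
    ∀ x ∈ K', ∀ y ∈ K', ‖x - y‖ ^ 2 < δ → ∀ t : ℝ, ‖f t x - f t y‖ ^ 2 < ε

/-- `h^b ∈ SPAA₀^{S²}(ℝ×L²(P,H),ρ)`. -/
def SPAA0S2F (ρ : ℝ → ℝ) (h : ℝ → E → E) : Prop :=
  ∀ x : E, SPAA0S2 ρ fun t => h t x

end Defs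

variable {Ω : Type*} [MeasurableSpace Ω] {P : Measure Ω} [IsProbabilityMeasure P]
variable {H : Type*} [NormedAddCommGroup H] [InnerProductSpace ℝ H] [CompleteSpace H]
  [SecondCountableTopology H]

/-!
Almost automorphy makes `g` return to every neighbourhood of `g t₀` syndetically: there are finitely
many shifts `τ` such that every `t` admits one of them with `g (t + τ)` near `g t₀`. By translation
invariance each `φ (· + τ)` has vanishing weighted mean, hence so does the sum of their norms, and
some `t` makes all of them small at once. The shift `τ` belonging to this `t` then gives
`f (t + τ) = g (t + τ) + φ (t + τ)` near `g t₀`.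
-/

theorem tendsto_norm_sub_sq_zero_iff {α E : Type*} [SeminormedAddCommGroup E] {l : Filter α}
    {u : α → E} {a : E} :
    Tendsto (fun n ↦ ‖u n - a‖ ^ 2) l (𝓝 0) ↔ Tendsto u l (𝓝 a) := by
  refine Iff.trans ⟨fun h ↦ ?_, fun h ↦ ?_⟩ tendsto_iff_norm_sub_tendsto_zero.symm
  · simpa using h.sqrt
  · simpa using h.pow 2

section AlmostAutomorphic

variable {E : Type*} [NormedAddCommGroup E]

theorem StochCont.continuous {x : ℝ → E} (hx : StochCont x) : Continuous x :=
  continuous_iff_continuousAt.2 fun s ↦ tendsto_norm_sub_sq_zero_iff.1 (hx s)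

theorem SAA.exists_finset_forall_exists_mem {g : ℝ → E} (hg : SAA g) {t₀ : ℝ} {U : Set E}
    (hU : U ∈ 𝓝 (g t₀)) : ∃ s : Finset ℝ, ∀ t, ∃ τ ∈ s, g (t + τ) ∈ U := by
  by_contra! hU_avoided
  -- Greedily build a sequence with `g (t₀ - u m + u n) ∉ U` for `m < n`; this contradicts the
  -- double limit `g (t₀ - u m + u n) → g t₀` (first in `n`, then in `m`) along a subsequence.
  obtain ⟨u, -, hu⟩ := exists_seq_of_forall_finset_exists (fun _ : ℝ ↦ True)
    (fun a b ↦ g (b + (t₀ - a)) ∉ U) fun s _ ↦ by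
      obtain ⟨t, ht⟩ := hU_avoided (s.image (t₀ - ·))
      exact ⟨t, trivial, fun a ha ↦ ht _ (Finset.mem_image_of_mem _ ha)⟩
  obtain ⟨k, hk, y, hgy, hyg⟩ := hg.2 u
  obtain ⟨m, hm⟩ : ∃ m, U ∈ 𝓝 (y (t₀ - u (k m))) :=
    ((tendsto_norm_sub_sq_zero_iff.1 (hyg t₀)).eventually (eventually_mem_nhds_iff.2 hU)).exists
  obtain ⟨n, hn, hmn⟩ : ∃ n, g (t₀ - u (k m) + u (k n)) ∈ U ∧ m < n :=
    (((tendsto_norm_sub_sq_zero_iff.1 (hgy _)).eventually_mem hm).and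
      (eventually_gt_atTop m)).exists
  exact hu (k m) (k n) (hk hmn) (add_comm (u (k n)) _ ▸ hn)

end AlmostAutomorphic

section WeightedMean

/-- The mean of `u` over `[-T, T]` with respect to the weight `ρ`; `SPAA0 ρ x` asks that the
weighted mean of `‖x ·‖` tend to `0` as `T → ∞`. It is `0` by convention when `muW ρ T = 0`. -/
def weightedMean (ρ u : ℝ → ℝ) (T : ℝ) : ℝ :=
  (muW ρ T)⁻¹ * ∫ t in (-T)..T, u t * ρ t

variable {ρ : ℝ → ℝ}

theorem weightedMean_finsetSum {ι : Type*} {s : Finset ι} {u : ι → ℝ → ℝ} {T : ℝ}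
    (hu : ∀ i ∈ s, IntervalIntegrable (fun t ↦ u i t * ρ t) volume (-T) T) :
    weightedMean ρ (fun t ↦ ∑ i ∈ s, u i t) T = ∑ i ∈ s, weightedMean ρ (u i) T := by
  simp only [weightedMean, Finset.sum_mul]
  rw [intervalIntegral.integral_finsetSum hu, Finset.mul_sum]

theorem le_weightedMean {u : ℝ → ℝ} {T c : ℝ} (hT : 0 ≤ T) (hμ : 0 < muW ρ T)
    (huρ : IntervalIntegrable (fun t ↦ u t * ρ t) volume (-T) T)
    (hρ_nonneg : ∀ t ∈ Icc (-T) T, 0 ≤ ρ t) (hcu : ∀ t ∈ Icc (-T) T, c ≤ u t) :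
    c ≤ weightedMean ρ u T := by
  have hρ : IntervalIntegrable ρ volume (-T) T :=
    intervalIntegral.intervalIntegrable_of_integral_ne_zero hμ.ne'
  rw [weightedMean, le_inv_mul_iff₀ hμ]
  calc
    muW ρ T * c = ∫ t in (-T)..T, c * ρ t := by
      rw [intervalIntegral.integral_const_mul, muW, mul_comm]
    _ ≤ ∫ t in (-T)..T, u t * ρ t :=
      intervalIntegral.integral_mono_on (by linarith) (hρ.const_mul c) huρ fun t ht ↦
        mul_le_mul_of_nonneg_right (hcu t ht) (hρ_nonneg t ht)

theorem intervalIntegrable_continuous_mul_of_locallyIntegrable (hρ : LocallyIntegrable ρ)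
    {u : ℝ → ℝ} (hu : Continuous u) (a b : ℝ) :
    IntervalIntegrable (fun t ↦ u t * ρ t) volume a b :=
  (hρ.integrableOn_isCompact isCompact_uIcc).intervalIntegrable.continuousOn_mul hu.continuousOn

theorem UInfty.exists_lt_of_tendsto_weightedMean (hρ : UInfty ρ) {u : ℝ → ℝ} (hu : Continuous u)
    {a b : ℝ} (hmean : Tendsto (weightedMean ρ u) atTop (𝓝 a)) (hab : a < b) : ∃ t, u t < b := by
  by_contra! hbu
  refine hab.not_ge (ge_of_tendsto hmean ?_)
  filter_upwards [hρ.2.2.eventually_gt_atTop 0, eventually_ge_atTop 0] with T hμ hT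
  exact le_weightedMean hT hμ
    (intervalIntegrable_continuous_mul_of_locallyIntegrable hρ.2.1 hu _ _)
    (fun t _ ↦ (hρ.1 t).le) fun t _ ↦ hbu t

end WeightedMean

section Ergodic

variable {E : Type*} [NormedAddCommGroup E] {ρ : ℝ → ℝ}

theorem SPAA0.tendsto_weightedMean_norm {x : ℝ → E} (hx : SPAA0 ρ x) :
    Tendsto (weightedMean ρ fun t ↦ ‖x t‖) atTop (𝓝 0) :=
  hx.2.2

theorem UInfty.exists_forall_norm_lt_of_SPAA0 (hρ : UInfty ρ) {ι : Type*} {s : Finset ι}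
    {x : ι → ℝ → E} (hx : ∀ i ∈ s, SPAA0 ρ (x i)) {ε : ℝ} (hε : 0 < ε) :
    ∃ t, ∀ i ∈ s, ‖x i t‖ < ε := by
  have hcont : ∀ i ∈ s, Continuous fun t ↦ ‖x i t‖ := fun i hi ↦ (hx i hi).1.continuous.norm
  have hmean : Tendsto (weightedMean ρ fun t ↦ ∑ i ∈ s, ‖x i t‖) atTop (𝓝 0) := by
    have hsum := tendsto_finsetSum s fun i hi ↦ (hx i hi).tendsto_weightedMean_norm
    rw [Finset.sum_const_zero] at hsum
    exact hsum.congr fun T ↦ (weightedMean_finsetSum fun i hi ↦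
      intervalIntegrable_continuous_mul_of_locallyIntegrable hρ.2.1 (hcont i hi) _ _).symm
  obtain ⟨t, ht⟩ := hρ.exists_lt_of_tendsto_weightedMean (continuous_finsetSum s hcont) hmean hε
  exact ⟨t, fun i hi ↦ (Finset.single_le_sum (fun j _ ↦ norm_nonneg (x j t)) hi).trans_lt ht⟩

theorem range_SAA_part_subset_closure_range_general (hρ : UInfty ρ) {f g φ : ℝ → E}
    (hg : SAA g) (hφ : ∀ τ, SPAA0 ρ fun t ↦ φ (t + τ)) (hf : ∀ t, f t = g t + φ t) :
    range g ⊆ closure (range f) := by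
  rintro _ ⟨t₀, rfl⟩
  refine Metric.mem_closure_range_iff.2 fun ε hε ↦ ?_
  obtain ⟨s, hs⟩ := hg.exists_finset_forall_exists_mem (Metric.ball_mem_nhds (g t₀) (half_pos hε))
  obtain ⟨t, hφ_small⟩ : ∃ t, ∀ τ ∈ s, ‖φ (t + τ)‖ < ε / 2 :=
    hρ.exists_forall_norm_lt_of_SPAA0 (fun τ _ ↦ hφ τ) (half_pos hε)
  obtain ⟨τ, hτ, hg_near⟩ := hs t
  refine ⟨t + τ, ?_⟩
  calc
    dist (g t₀) (f (t + τ)) ≤ dist (g t₀) (g (t + τ)) + dist (g (t + τ)) (f (t + τ)) :=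
      dist_triangle _ _ _
    _ = dist (g (t + τ)) (g t₀) + ‖φ (t + τ)‖ := by
      rw [dist_comm (g t₀), hf, dist_self_add_right]
    _ < ε / 2 + ε / 2 := add_lt_add hg_near (hφ_small τ hτ)
    _ = ε := add_halves ε

end Ergodic

/-- Lemma 2.9. If `ρ ∈ 𝓤^inv` and `f = g + φ ∈ WPAA(ρ)` with `g ∈ SAA`
and `φ ∈ SPAA₀(ρ)`, then the range of `g` is contained in the closure of the range of `f`:
for every `t₀` and `ε > 0` there is `t` with `(E‖g(t₀) − f(t)‖²)^{1/2} < ε`. -/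
theorem range_SAA_part_subset_closure_range
    (ρ : ℝ → ℝ) (hρ : UInvSp (Lp H 2 P) ρ)
    (f g φ : ℝ → Lp H 2 P) (hg : SAA g) (hφ : SPAA0 ρ φ)
    (hf : ∀ t, f t = g t + φ t) :
    ∀ t₀ : ℝ, ∀ ε > 0, ∃ t : ℝ, ‖g t₀ - f t‖ < ε := by
  simpa only [range_subset_iff, Metric.mem_closure_range_iff, dist_eq_norm] using
    range_SAA_part_subset_closure_range_general hρ.1 hg (hρ.2 φ hφ) hf
end
end

section
/- Suppose f : ℝ × L²(P,H) → L²(P,H) satisfies f(·,x) ∈ L²_loc(ℝ,L²(P,H)) for each x ∈ L²(P,H) and f is uniformly stochastically continuous on each bounded subset of L²(P,H) uniformly for t ∈ ℝ. If u : ℝ → L²(P,H) is measurable and K = closure of {u(t) : t ∈ ℝ} is compact in L²(P,H), then the process t ↦ f(t,u(t)) belongs to L²_loc(ℝ,L²(P,H)); in particular, for every compact set E ⊆ ℝ, ∫_E E‖f(s,u(s))‖² ds < ∞. -/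
open MeasureTheory Filter Set Topology

noncomputable section

variable {Ω : Type*} [MeasurableSpace Ω] {P : Measure Ω} [IsProbabilityMeasure P]
variable {H : Type*} [NormedAddCommGroup H] [InnerProductSpace ℝ H] [CompleteSpace H]
  [SecondCountableTopology H]

/-!
On a totally bounded set `K`, uniform equicontinuity of `f t`, `t ∈ ℝ`, turns a finite net of `K`
into finitely many points `y` for which `∑ ‖f t y‖ + 1` dominates `‖f t x‖` for all `t` and all
`x ∈ K` at once; this majorant is square integrable over compact sets of times. Measurability of
`t ↦ f t (u t)` is the Carathéodory argument: it is the pointwise limit of `t ↦ f t (uₙ t)` for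
simple functions `uₙ` tending to `u`.
-/

section Caratheodory

open TopologicalSpace

variable {X E F : Type*} [MeasurableSpace X] {μ : Measure X} {g : X → E → F}
  [TopologicalSpace F] [PseudoMetrizableSpace F]

theorem aestronglyMeasurable_comp_simpleFunc
    (hg : ∀ y, AEStronglyMeasurable (fun t => g t y) μ) (s : SimpleFunc X E) :
    AEStronglyMeasurable (fun t => g t (s t)) μ := by
  have hcover : ⋃ y : s.range, s ⁻¹' {y.1} = univ :=
    eq_univ_of_forall fun t => mem_iUnion.2 ⟨⟨s t, s.mem_range_self t⟩, rfl⟩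
  rw [← μ.restrict_univ, ← hcover, aestronglyMeasurable_iUnion_iff]
  intro y
  refine (hg y).restrict.congr ?_
  filter_upwards [ae_restrict_mem (s.measurableSet_fiber y)] with t ht
  rw [show s t = y from ht]

theorem aestronglyMeasurable_comp_of_continuous [TopologicalSpace E] {u : X → E}
    (hg : ∀ y, AEStronglyMeasurable (fun t => g t y) μ) (hcont : ∀ t, Continuous (g t))
    (hu : AEStronglyMeasurable u μ) : AEStronglyMeasurable (fun t => g t (u t)) μ := by
  obtain ⟨v, hv, huv⟩ := hu
  have hgv : AEStronglyMeasurable (fun t => g t (v t)) μ :=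
    aestronglyMeasurable_of_tendsto_ae atTop
      (fun n => aestronglyMeasurable_comp_simpleFunc hg (hv.approx n))
      (ae_of_all μ fun t => ((hcont t).tendsto (v t)).comp (hv.tendsto_approx t))
  exact hgv.congr (huv.mono fun t ht => congrArg (g t) ht.symm)

theorem aestronglyMeasurable_comp_of_continuousOn [TopologicalSpace E] [PseudoMetrizableSpace E]
    {K : Set E} {u : X → E} (hg : ∀ y ∈ K, AEStronglyMeasurable (fun t => g t y) μ)
    (hcont : ∀ t, ContinuousOn (g t) K) (hu : AEStronglyMeasurable u μ) (huK : ∀ t, u t ∈ K) :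
    AEStronglyMeasurable (fun t => g t (u t)) μ :=
  have huK' : AEStronglyMeasurable (fun t => (⟨u t, huK t⟩ : K)) μ :=
    IsEmbedding.subtypeVal.aestronglyMeasurable_comp_iff.1 hu
  aestronglyMeasurable_comp_of_continuous (g := fun t (y : K) => g t y)
    (fun y => hg y y.2) (fun t => (hcont t).domRestrict) huK'

end Caratheodory

section Domination

open TopologicalSpace Uniformity

variable {X E F : Type*} [UniformSpace E] [NormedAddCommGroup F] {g : X → E → F} {K : Set E}

theorem exists_finset_forall_norm_le_sum_add_one (hK : TotallyBounded K)
    (hg : UniformEquicontinuousOn g K) :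
    ∃ s : Finset E, ↑s ⊆ K ∧ ∀ t, ∀ x ∈ K, ‖g t x‖ ≤ ∑ y ∈ s, ‖g t y‖ + 1 := by
  obtain ⟨U, hU, hgU⟩ := ((𝓤 E).basis_sets.inf_principal (K ×ˢ K)).uniformEquicontinuousOn_iff
    Metric.uniformity_basis_dist |>.1 hg 1 one_pos
  obtain ⟨s, hsK, hs, hcover⟩ := hK.exists_subset hU
  lift s to Finset E using hs
  refine ⟨s, hsK, fun t x hx => ?_⟩
  obtain ⟨y, hy, hxy⟩ := mem_iUnion₂.1 (hcover hx)
  have hclose : ‖g t x - g t y‖ < 1 := by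
    simpa [dist_eq_norm] using hgU x y ⟨hxy, hx, hsK hy⟩ t
  calc ‖g t x‖ ≤ ‖g t y‖ + ‖g t x - g t y‖ := norm_le_norm_add_norm_sub' _ _
    _ ≤ ∑ y ∈ s, ‖g t y‖ + 1 := by
      gcongr
      exact Finset.single_le_sum (f := fun y => ‖g t y‖) (fun _ _ => norm_nonneg _) hy

theorem memLp_comp_of_uniformEquicontinuousOn [PseudoMetrizableSpace E] [MeasurableSpace X]
    {μ : Measure X} [IsFiniteMeasure μ] {p : ENNReal} {u : X → E} (hK : TotallyBounded K)
    (hg : UniformEquicontinuousOn g K) (hgp : ∀ y ∈ K, MemLp (fun t => g t y) p μ)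
    (hu : AEStronglyMeasurable u μ) (huK : ∀ t, u t ∈ K) :
    MemLp (fun t => g t (u t)) p μ := by
  obtain ⟨s, hsK, hs⟩ := exists_finset_forall_norm_le_sum_add_one hK hg
  have hmajorant : MemLp (fun t => ∑ y ∈ s, ‖g t y‖ + 1) p μ :=
    (memLp_finsetSum s fun y hy => (hgp y (hsK hy)).norm).add (memLp_const 1)
  have hmeas : AEStronglyMeasurable (fun t => g t (u t)) μ :=
    aestronglyMeasurable_comp_of_continuousOn (fun y hy => (hgp y hy).aestronglyMeasurable)
      (fun t => (hg.uniformContinuousOn t).continuousOn) hu huK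
  exact hmajorant.mono' hmeas (ae_of_all μ fun t => hs t (u t) (huK t))

end Domination

theorem L2loc_iff_memLp_norm {E : Type*} [NormedAddCommGroup E] {x : ℝ → E} :
    L2loc x ↔ ∀ K : Set ℝ, IsCompact K → MemLp (fun s => ‖x s‖) 2 (volume.restrict K) := by
  refine forall₂_congr fun K _ => ⟨fun hx => ?_, fun hx => hx.integrable_sq⟩
  have hmeas : AEStronglyMeasurable (fun s => ‖x s‖) (volume.restrict K) := by
    simpa only [Real.sqrt_sq (norm_nonneg _)] using
      Real.continuous_sqrt.comp_aestronglyMeasurable hx.aestronglyMeasurable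
  exact (memLp_two_iff_integrable_sq hmeas).2 hx

theorem UnifStochCont.uniformEquicontinuousOn {E : Type*} [NormedAddCommGroup E]
    {f : ℝ → E → E} (hf : UnifStochCont f) {K : Set E} (hK : Bornology.IsBounded K) :
    UniformEquicontinuousOn f K := by
  rw [(Metric.uniformity_basis_dist.inf_principal (K ×ˢ K)).uniformEquicontinuousOn_iff
    Metric.uniformity_basis_dist]
  intro ε hε
  obtain ⟨δ, hδ, hfδ⟩ := hf K hK (ε ^ 2) (pow_pos hε 2)
  refine ⟨√δ, Real.sqrt_pos.2 hδ, fun x y ⟨hxy, hx, hy⟩ t => ?_⟩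
  have hsq : ‖x - y‖ ^ 2 < δ := by
    rwa [← Real.lt_sqrt (norm_nonneg _), ← dist_eq_norm]
  simpa only [mem_ofPred_eq, dist_eq_norm] using
    lt_of_pow_lt_pow_left₀ 2 hε.le (hfδ x hx y hy hsq t)

theorem composition_L2loc_general {E F : Type*} [UniformSpace E]
    [TopologicalSpace.PseudoMetrizableSpace E] [NormedAddCommGroup F] {K : Set E}
    (hK : TotallyBounded K) (f : ℝ → E → F)
    (hfl : ∀ x ∈ K, L2loc fun t => f t x) (hfc : UniformEquicontinuousOn f K)
    (u : ℝ → E) (hu : AEStronglyMeasurable u) (huK : ∀ t, u t ∈ K) :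
    L2loc fun t => f t (u t) := by
  refine L2loc_iff_memLp_norm.2 fun S hS => ?_
  have : IsFiniteMeasure (volume.restrict S) := isFiniteMeasure_restrict.2 hS.measure_ne_top
  -- `L2loc` only makes the norms `‖f t x‖` measurable, so it is to these that domination applies.
  have hnorm : UniformEquicontinuousOn (fun t x => ‖f t x‖) K := fun V hV =>
    hfc _ (uniformContinuous_norm hV)
  exact memLp_comp_of_uniformEquicontinuousOn (g := fun t x => ‖f t x‖) hK hnorm
    (fun x hx => L2loc_iff_memLp_norm.1 (hfl x hx) S hS) hu.restrict huK

/-- first step of Lemma 3.6. If `f(·,x) ∈ L²_loc` for each `x`, `f` is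
uniformly stochastically continuous on bounded sets uniformly in `t`, `u` is measurable
and the closure of the range of `u` is compact, then `t ↦ f(t,u(t)) ∈ L²_loc`. -/
theorem composition_L2loc
    (f : ℝ → Lp H 2 P → Lp H 2 P)
    (hfl : ∀ x : Lp H 2 P, L2loc fun t => f t x)
    (hfc : UnifStochCont f)
    (u : ℝ → Lp H 2 P) (hu : MeasureTheory.StronglyMeasurable u)
    (hK : IsCompact (closure (Set.range u))) :
    L2loc fun t => f t (u t) :=
  composition_L2loc_general hK.totallyBounded f (fun x _ => hfl x)
    (hfc.uniformEquicontinuousOn hK.isBounded) u hu.aestronglyMeasurable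
    fun t => subset_closure (mem_range_self t)
end
end

section
/- Let X be a Banach space, A : D(A) ⊆ X → X a closed linear operator, a ∈ L¹(ℝ₊) a scalar kernel not identically zero, and (S(t))_{t≥0} a family of bounded linear operators on X such that: t ↦ S(t)x is strongly measurable for each x ∈ X; ‖S(t)‖ ≤ φ(t) for a.e. t ≥ 0 with φ ∈ L¹(ℝ₊) nonincreasing; for every x ∈ D(A) and t ≥ 0, S(t)x ∈ D(A) with A S(t)x = S(t)A x; and S(t)x = a(t)x + ∫₀ᵗ a(t−s) A S(s)x ds for all x ∈ D(A) and a.e. t ≥ 0. Let f ∈ L¹(ℝ,X) with f(t) ∈ D(A) for all t ∈ ℝ and t ↦ A f(t) in L¹(ℝ,X). Then x(t) := ∫_{−∞}^{t} S(t−s) f(s) ds is well-defined, x(t) ∈ D(A) for each t ∈ ℝ, and x satisfies the Volterra equation x(t) = ∫_{−∞}^{t} a(t−s)[A x(s) + f(s)] ds for all t ∈ ℝ. -/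
open MeasureTheory Filter Set Topology

noncomputable section

variable {Ω : Type*} [MeasurableSpace Ω] {P : Measure Ω} [IsProbabilityMeasure P]
variable {H : Type*} [NormedAddCommGroup H] [InnerProductSpace ℝ H] [CompleteSpace H]
  [SecondCountableTopology H]

/-!
Extended by zero to negative times, `a` and `S` turn every integral into a convolution over `ℝ`.
Integration preserves the closed graph of `A`, hence `x = S ∗ f` takes values in `D` and
`A x = S ∗ A f`. The null set off which the resolvent equation holds depends on the vector it is
applied to; since `(f, A f)` has essentially separable range and both sides are continuous on the
graph, a single null set suffices, and the equation may be applied to `f s` at time `t - s` for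
almost every `s`. Integrating in `s` and exchanging the order of integration gives
`S ∗ f = a ∗ f + a ∗ (S ∗ A f)`.
-/

section Measurability

variable {α E F : Type*} {mα : MeasurableSpace α} {μ : Measure α}

theorem aestronglyMeasurable_apply_of_continuous [TopologicalSpace E] [TopologicalSpace F]
    [TopologicalSpace.PseudoMetrizableSpace F] {Φ : α → E → F} {g : α → E}
    (hΦ_meas : ∀ x, AEStronglyMeasurable (fun z => Φ z x) μ) (hΦ_cont : ∀ z, Continuous (Φ z))
    (hg : AEStronglyMeasurable g μ) : AEStronglyMeasurable (fun z => Φ z (g z)) μ := by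
  classical
  have apply_simpleFunc (q : SimpleFunc α E) : AEStronglyMeasurable (fun z => Φ z (q z)) μ := by
    rcases isEmpty_or_nonempty α with _ | ⟨⟨z⟩⟩
    · exact StronglyMeasurable.of_subsingleton_dom.aestronglyMeasurable
    have : Nonempty E := ⟨q z⟩
    induction q using SimpleFunc.induction' with
    | const c => exact hΦ_meas c
    | pcw hs hq hr =>
      refine (hq.restrict.piecewise hs hr.restrict).congr (.of_forall fun z => ?_)
      simp only [SimpleFunc.coe_piecewise, Set.piecewise]
      split_ifs <;> rfl
  obtain ⟨g', hg', hgg'⟩ := hg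
  have apply_g' : AEStronglyMeasurable (fun z => Φ z (g' z)) μ :=
    aestronglyMeasurable_of_tendsto_ae atTop (fun n => apply_simpleFunc (hg'.approx n))
      (.of_forall fun z => ((hΦ_cont z).tendsto _).comp (hg'.tendsto_approx z))
  exact apply_g'.congr (hgg'.mono fun z hz => congrArg (Φ z) hz.symm)

theorem ae_forall_mem_of_isSeparable [TopologicalSpace E]
    [TopologicalSpace.PseudoMetrizableSpace E] {C : α → Set E} {K : Set E}
    (hC : ∀ z, IsClosed (C z)) (hK : TopologicalSpace.IsSeparable K)
    (hKC : ∀ x ∈ K, ∀ᵐ z ∂μ, x ∈ C z) : ∀ᵐ z ∂μ, K ⊆ C z := by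
  obtain ⟨c, hcK, hc, hKc⟩ := hK.exists_countable_dense_subset
  filter_upwards [(ae_ball_iff hc).2 fun x hx => hKC x (hcK hx)] with z hz
  exact hKc.trans (closure_minimal hz (hC z))

end Measurability

section ClosedOperators

theorem integral_mem_submodule_of_isClosed {α E : Type*} {mα : MeasurableSpace α} {μ : Measure α}
    [NormedAddCommGroup E] [NormedSpace ℝ E] [CompleteSpace E] {Γ : Submodule ℝ E}
    (hΓ : IsClosed (Γ : Set E)) {h : α → E} (hmem : ∀ᵐ z ∂μ, h z ∈ Γ) : ∫ z, h z ∂μ ∈ Γ := by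
  by_cases hint : Integrable h μ
  · have : IsClosed (Γ : Set E) := hΓ
    have mkQ_integral : Γ.mkQL (∫ z, h z ∂μ) = 0 := by
      rw [← Γ.mkQL.integral_comp_comm hint]
      exact integral_eq_zero_of_ae (hmem.mono fun z hz => (Submodule.Quotient.mk_eq_zero Γ).2 hz)
    exact (Submodule.Quotient.mk_eq_zero Γ).1 mkQ_integral
  · rw [integral_undef hint]
    exact Γ.zero_mem

variable {R E F : Type*} [CommRing R] [AddCommGroup E] [Module R E] [AddCommGroup F] [Module R F]

/-- The partially defined operator with domain `D` given by a total function `A` that is linear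
on `D`; the values of `A` outside `D` are discarded. -/
def linearPMapOfLinearOn (D : Submodule R E) (A : E → F)
    (hA_add : ∀ x ∈ D, ∀ y ∈ D, A (x + y) = A x + A y)
    (hA_smul : ∀ (c : R), ∀ x ∈ D, A (c • x) = c • A x) : E →ₗ.[R] F where
  domain := D
  toFun :=
    { toFun := fun x => A x
      map_add' := fun x y => hA_add x x.2 y y.2
      map_smul' := fun c x => hA_smul c x x.2 }

variable {D : Submodule R E} {A : E → F} {hA_add : ∀ x ∈ D, ∀ y ∈ D, A (x + y) = A x + A y}
  {hA_smul : ∀ (c : R), ∀ x ∈ D, A (c • x) = c • A x}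

theorem mem_graph_linearPMapOfLinearOn {p : E × F} :
    p ∈ (linearPMapOfLinearOn D A hA_add hA_smul).graph ↔ p.1 ∈ D ∧ A p.1 = p.2 := by
  rw [LinearPMap.mem_graph_iff]
  exact ⟨fun ⟨x, hx, hAx⟩ => hx ▸ ⟨x.2, hAx⟩, fun ⟨hx, hAx⟩ => ⟨⟨p.1, hx⟩, rfl, hAx⟩⟩

theorem isClosed_linearPMapOfLinearOn [TopologicalSpace E] [TopologicalSpace F]
    [SequentialSpace (E × F)]
    (hA_closed : ∀ (u : ℕ → E) (x : E) (y : F), (∀ n, u n ∈ D) →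
      Tendsto u atTop (𝓝 x) → Tendsto (fun n => A (u n)) atTop (𝓝 y) → x ∈ D ∧ A x = y) :
    (linearPMapOfLinearOn D A hA_add hA_smul).IsClosed := by
  refine IsSeqClosed.isClosed fun u p hu hp => mem_graph_linearPMapOfLinearOn.2 ?_
  have hu n : (u n).1 ∈ D ∧ A (u n).1 = (u n).2 := mem_graph_linearPMapOfLinearOn.1 (hu n)
  refine hA_closed (fun n => (u n).1) p.1 p.2 (fun n => (hu n).1) hp.fst_nhds ?_
  simpa only [(hu _).2] using hp.snd_nhds

end ClosedOperators

section OperatorFamilies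

variable {𝕜 : Type*} [NontriviallyNormedField 𝕜]
variable {α β E F : Type*} {mα : MeasurableSpace α} {mβ : MeasurableSpace β}
variable [NormedAddCommGroup E] [NormedSpace 𝕜 E] [NormedAddCommGroup F] [NormedSpace 𝕜 F]

/-- A strongly measurable family of bounded operators with norms essentially bounded by `M`.
Measurability is required only pointwise on vectors, so `T` need not be measurable for the operator
norm. -/
structure EssBoundedFamily (T : α → E →L[𝕜] F) (M : NNReal) (μ : Measure α) : Prop where
  aestronglyMeasurable : ∀ x, AEStronglyMeasurable (fun z => T z x) μ
  ae_norm_le : ∀ᵐ z ∂μ, ‖T z‖ ≤ M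

namespace EssBoundedFamily

variable {T : α → E →L[𝕜] F} {M : NNReal} {μ : Measure α}

theorem comp_quasiMeasurePreserving {ν : Measure β} {m : β → α} (hT : EssBoundedFamily T M μ)
    (hm : Measure.QuasiMeasurePreserving m ν μ) : EssBoundedFamily (fun z => T (m z)) M ν where
  aestronglyMeasurable x := (hT.aestronglyMeasurable x).comp_quasiMeasurePreserving hm
  ae_norm_le := hm.ae hT.ae_norm_le

theorem integrable_apply (hT : EssBoundedFamily T M μ) {g : α → E} (hg : Integrable g μ) :
    Integrable (fun z => T z (g z)) μ := by
  refine (hg.norm.const_mul M).mono' ?_ ?_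
  · exact aestronglyMeasurable_apply_of_continuous hT.aestronglyMeasurable
      (fun z => (T z).continuous) hg.aestronglyMeasurable
  · exact hT.ae_norm_le.mono fun z hz => (T z).le_of_opNorm_le hz _

theorem indicator {s : Set α} (hs : MeasurableSet s)
    (hT : EssBoundedFamily T M (μ.restrict s)) : EssBoundedFamily (s.indicator T) M μ where
  aestronglyMeasurable x := by
    refine ((aestronglyMeasurable_indicator_iff hs).2 (hT.aestronglyMeasurable x)).congr
      (.of_forall fun z => ?_)
    by_cases hz : z ∈ s <;> simp [hz]
  ae_norm_le := by
    filter_upwards [(ae_restrict_iff' hs).1 hT.ae_norm_le] with z hz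
    by_cases hzs : z ∈ s <;> simp [hzs, hz]

theorem continuous_integral_smul [NormedSpace ℝ F] {k : α → 𝕜} (hT : EssBoundedFamily T M μ)
    (hk : Integrable k μ) : Continuous fun x => ∫ z, k z • T z x ∂μ := by
  refine continuous_iff_continuousAt.2 fun x₀ => continuousAt_of_dominated
    (bound := fun z => ‖k z‖ * (M * (‖x₀‖ + 1))) ?_ ?_ (hk.norm.mul_const _) ?_
  · exact .of_forall fun x => hk.aestronglyMeasurable.smul (hT.aestronglyMeasurable x)
  · filter_upwards [Metric.ball_mem_nhds x₀ one_pos] with x hx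
    have hx_norm : ‖x‖ ≤ ‖x₀‖ + 1 := (norm_lt_of_mem_ball hx).le
    filter_upwards [hT.ae_norm_le] with z hz
    rw [norm_smul]
    gcongr
    exact (T z).le_of_opNorm_le_of_le hz hx_norm
  · exact .of_forall fun z => ((T z).continuous.const_smul (k z)).continuousAt

end EssBoundedFamily

theorem essBoundedFamily_of_antitoneOn {T : ℝ → E →L[𝕜] F} {φ : ℝ → ℝ}
    (hT_meas : ∀ x, AEStronglyMeasurable (fun t => T t x) (volume.restrict (Ici 0)))
    (hφ₀ : 0 ≤ φ 0) (hφ : AntitoneOn φ (Ici 0))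
    (hT_le : ∀ᵐ t ∂(volume.restrict (Ici (0 : ℝ))), ‖T t‖ ≤ φ t) :
    EssBoundedFamily T ⟨φ 0, hφ₀⟩ (volume.restrict (Ici 0)) where
  aestronglyMeasurable := hT_meas
  ae_norm_le := by
    filter_upwards [hT_le, ae_restrict_mem measurableSet_Ici] with t ht ht₀
    exact ht.trans (hφ self_mem_Ici ht₀ ht₀)

end OperatorFamilies

section Convolution

variable {𝕜 : Type*} [RCLike 𝕜]
variable {X : Type*} [NormedAddCommGroup X] [NormedSpace 𝕜 X]
variable {G : Type*} [AddCommGroup G] [MeasurableSpace G] [MeasurableAdd₂ G] [MeasurableNeg G]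
variable {μ : Measure G} [SFinite μ] [μ.IsAddLeftInvariant]
variable {T : G → X →L[𝕜] X} {M : NNReal} {b : G → 𝕜} {Γ : Set (X × X)} {f g : G → X}

namespace EssBoundedFamily

theorem comp_sub_left (hT : EssBoundedFamily T M μ) (t : G) :
    EssBoundedFamily (fun s => T (t - s)) M μ :=
  hT.comp_quasiMeasurePreserving (quasiMeasurePreserving_sub_left μ t)

theorem integral_apply_sub_mem [NormedSpace ℝ X] [CompleteSpace X] {Γ : Submodule 𝕜 (X × X)}
    (hΓ : IsClosed (Γ : Set (X × X))) (hT : EssBoundedFamily T M μ)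
    (hTΓ : ∀ p ∈ Γ, ∀ t, (T t p.1, T t p.2) ∈ Γ) (hf : Integrable f μ) (hg : Integrable g μ)
    (hfg : ∀ᵐ s ∂μ, (f s, g s) ∈ Γ) (t : G) :
    (∫ s, T (t - s) (f s) ∂μ, ∫ s, T (t - s) (g s) ∂μ) ∈ Γ := by
  have hT_sub := hT.comp_sub_left t
  rw [← integral_pair (hT_sub.integrable_apply hf) (hT_sub.integrable_apply hg)]
  exact integral_mem_submodule_of_isClosed (Γ := Γ.restrictScalars ℝ) hΓ
    (hfg.mono fun s hs => hTΓ _ hs (t - s))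

variable [μ.IsNegInvariant]

theorem integrable_smul_apply_sub_prod (hT : EssBoundedFamily T M μ) (hb : Integrable b μ)
    (hg : Integrable g μ) (t : G) :
    Integrable (fun z : G × G => b (t - z.1) • T (z.1 - z.2) (g z.2)) (μ.prod μ) := by
  have hT_sub : EssBoundedFamily (fun z : G × G => T (z.1 - z.2)) M (μ.prod μ) :=
    hT.comp_quasiMeasurePreserving (quasiMeasurePreserving_sub μ μ)
  simpa only [map_smul] using hT_sub.integrable_apply ((hb.comp_sub_left t).smul_prod hg)

variable [NormedSpace ℝ X]

theorem ae_apply_sub_eq_of_resolvent (hT : EssBoundedFamily T M μ) (hb : Integrable b μ)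
    (hres : ∀ p ∈ Γ, ∀ᵐ t ∂μ, T t p.1 = b t • p.1 + ∫ r, b (t - r) • T r p.2 ∂μ)
    (hf : AEStronglyMeasurable f μ) (hg : AEStronglyMeasurable g μ)
    (hfg : ∀ᵐ s ∂μ, (f s, g s) ∈ Γ) (t : G) :
    ∀ᵐ s ∂μ, T (t - s) (f s) = b (t - s) • f s + ∫ u, b (t - u) • T (u - s) (g s) ∂μ := by
  obtain ⟨K, hK_sep, hK⟩ := (hf.prodMk hg).isSeparable_ae_range
  let C (τ : G) : Set (X × X) := {p | T τ p.1 = b τ • p.1 + ∫ r, b (τ - r) • T r p.2 ∂μ}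
  have hC_closed (τ : G) : IsClosed (C τ) :=
    isClosed_eq ((T τ).continuous.comp continuous_fst) ((continuous_fst.const_smul _).add
      ((hT.continuous_integral_smul (hb.comp_sub_left τ)).comp continuous_snd))
  have hC : ∀ᵐ τ ∂μ, Γ ∩ K ⊆ C τ :=
    ae_forall_mem_of_isSeparable hC_closed (hK_sep.mono inter_subset_right) fun p hp => hres p hp.1
  filter_upwards [(quasiMeasurePreserving_sub_left μ t).ae hC, hfg, hK] with s hsC hsΓ hsK
  have resolvent_eq : T (t - s) (f s) = b (t - s) • f s + ∫ r, b (t - s - r) • T r (g s) ∂μ :=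
    hsC ⟨hsΓ, hsK⟩
  rw [resolvent_eq, ← integral_sub_right_eq_self (fun r => b (t - s - r) • T r (g s)) s]
  simp only [sub_sub_sub_cancel_right]

theorem integral_apply_sub_eq_of_resolvent (hT : EssBoundedFamily T M μ) (hb : Integrable b μ)
    (hres : ∀ p ∈ Γ, ∀ᵐ t ∂μ, T t p.1 = b t • p.1 + ∫ r, b (t - r) • T r p.2 ∂μ)
    (hf : Integrable f μ) (hg : Integrable g μ) (hfg : ∀ᵐ s ∂μ, (f s, g s) ∈ Γ) (t : G) :
    ∫ s, T (t - s) (f s) ∂μ = ∫ s, b (t - s) • (∫ u, T (s - u) (g u) ∂μ + f s) ∂μ := by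
  have resolvent_f := hT.ae_apply_sub_eq_of_resolvent hb hres hf.1 hg.1 hfg t
  have integrable_prod := hT.integrable_smul_apply_sub_prod hb hg t
  -- `b` and `f` are merely integrable, so at a fixed `t` this has to come from the resolvent.
  have integrable_bf : Integrable (fun s => b (t - s) • f s) μ := by
    refine (((hT.comp_sub_left t).integrable_apply hf).sub
      integrable_prod.integral_prod_right).congr ?_
    filter_upwards [resolvent_f] with s hs
    rw [Pi.sub_apply, hs, add_sub_cancel_right]
  calc ∫ s, T (t - s) (f s) ∂μ
      = ∫ s, (b (t - s) • f s + ∫ u, b (t - u) • T (u - s) (g s) ∂μ) ∂μ :=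
        integral_congr_ae resolvent_f
    _ = ∫ s, b (t - s) • f s ∂μ + ∫ s, ∫ u, b (t - u) • T (u - s) (g s) ∂μ ∂μ :=
        integral_add integrable_bf integrable_prod.integral_prod_right
    _ = ∫ u, b (t - u) • f u ∂μ + ∫ u, ∫ s, b (t - u) • T (u - s) (g s) ∂μ ∂μ := by
        rw [← integral_integral_swap integrable_prod]
    _ = ∫ u, (b (t - u) • f u + ∫ s, b (t - u) • T (u - s) (g s) ∂μ) ∂μ :=
        (integral_add integrable_bf integrable_prod.integral_prod_left).symm
    _ = ∫ s, b (t - s) • (∫ u, T (s - u) (g u) ∂μ + f s) ∂μ := by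
        simp only [integral_smul, smul_add, add_comm]

end EssBoundedFamily

end Convolution

section CausalExtension

variable {𝕜 : Type*} [NontriviallyNormedField 𝕜]
variable {E F : Type*} [NormedAddCommGroup E] [NormedSpace 𝕜 E]
  [NormedAddCommGroup F] [NormedSpace 𝕜 F]

theorem indicator_apply_prodMk_mem {α : Type*} {T : α → E →L[𝕜] F} {s : Set α}
    {Γ : Submodule 𝕜 (F × F)} {x y : E} (hΓ : ∀ t ∈ s, (T t x, T t y) ∈ Γ) (t : α) :
    (s.indicator T t x, s.indicator T t y) ∈ Γ := by
  by_cases ht : t ∈ s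
  · simpa only [indicator_of_mem ht] using hΓ t ht
  · simp only [indicator_of_notMem ht]
    exact Γ.zero_mem

variable {G : Type*} [AddGroup G] [Preorder G] [AddRightMono G] (a : G → 𝕜) (S : G → E →L[𝕜] F)

theorem indicator_Ici_sub_apply (f : G → E) (t : G) :
    (fun s => (Ici 0).indicator S (t - s) (f s)) =
      (Iic t).indicator fun s => S (t - s) (f s) := by
  ext s
  by_cases hs : s ≤ t <;> simp [hs]

theorem indicator_Ici_sub_smul (f : G → E) (t : G) :
    (fun s => (Ici 0).indicator a (t - s) • f s) =
      (Iic t).indicator fun s => a (t - s) • f s := by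
  ext s
  by_cases hs : s ≤ t <;> simp [hs]

theorem indicator_Ici_sub_smul_indicator_Ici_apply (x : E) (t : G) :
    (fun s => (Ici 0).indicator a (t - s) • (Ici 0).indicator S s x) =
      (Icc 0 t).indicator fun s => a (t - s) • S s x := by
  ext s
  by_cases hs : s ≤ t <;> by_cases hs₀ : 0 ≤ s <;> simp [hs, hs₀]

end CausalExtension

section HalfLineResolvent

variable {𝕜 : Type*} [NontriviallyNormedField 𝕜]
variable {E : Type*} [NormedAddCommGroup E] [NormedSpace 𝕜 E] [NormedSpace ℝ E]
variable {a : ℝ → 𝕜} {S : ℝ → E →L[𝕜] E}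

theorem ae_resolvent_of_commute {A : E → E} {x : E}
    (hcomm : ∀ t ≥ (0 : ℝ), A (S t x) = S t (A x))
    (hres : ∀ᵐ t ∂(volume.restrict (Ici (0 : ℝ))),
      S t x = a t • x + ∫ s in (0 : ℝ)..t, a (t - s) • A (S s x)) :
    ∀ᵐ t ∂(volume.restrict (Ici (0 : ℝ))),
      S t x = a t • x + ∫ s in (0 : ℝ)..t, a (t - s) • S s (A x) := by
  filter_upwards [hres, ae_restrict_mem measurableSet_Ici] with t ht ht₀
  rw [ht]
  congr 1
  refine intervalIntegral.integral_congr fun s hs => ?_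
  rw [uIcc_of_le ht₀] at hs
  simp only [hcomm s hs.1]

theorem ae_resolvent_indicator_Ici {x y : E}
    (hres : ∀ᵐ t ∂(volume.restrict (Ici (0 : ℝ))),
      S t x = a t • x + ∫ s in (0 : ℝ)..t, a (t - s) • S s y) :
    ∀ᵐ t, (Ici 0).indicator S t x =
      (Ici 0).indicator a t • x +
        ∫ s, (Ici 0).indicator a (t - s) • (Ici 0).indicator S s y := by
  filter_upwards [(ae_restrict_iff' measurableSet_Ici).1 hres] with t ht
  rw [indicator_Ici_sub_smul_indicator_Ici_apply, integral_indicator measurableSet_Icc]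
  rcases le_or_gt 0 t with ht₀ | ht₀
  · rw [indicator_of_mem (mem_Ici.2 ht₀), indicator_of_mem (mem_Ici.2 ht₀), ht ht₀,
      intervalIntegral.integral_of_le ht₀, integral_Icc_eq_integral_Ioc]
  · simp [ht₀]

end HalfLineResolvent

theorem integral_resolvent_solves_volterra_general
    {𝕜 X : Type*} [RCLike 𝕜] [NormedAddCommGroup X] [NormedSpace 𝕜 X] [NormedSpace ℝ X]
    [CompleteSpace X] (D : Submodule 𝕜 X) (A : X → X)
    (hA_add : ∀ x ∈ D, ∀ y ∈ D, A (x + y) = A x + A y)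
    (hA_smul : ∀ (c : 𝕜), ∀ x ∈ D, A (c • x) = c • A x)
    (hA_closed : ∀ (u : ℕ → X) (x y : X), (∀ n, u n ∈ D) →
      Tendsto u atTop (𝓝 x) → Tendsto (fun n => A (u n)) atTop (𝓝 y) → x ∈ D ∧ A x = y)
    (a : ℝ → 𝕜) (ha : IntegrableOn a (Ici 0)) (S : ℝ → X →L[𝕜] X) (M : NNReal)
    (hS : EssBoundedFamily S M (volume.restrict (Ici 0)))
    (hcomm : ∀ x ∈ D, ∀ t ≥ (0 : ℝ), S t x ∈ D ∧ A (S t x) = S t (A x))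
    (hres : ∀ x ∈ D, ∀ᵐ t ∂(volume.restrict (Ici (0 : ℝ))),
      S t x = a t • x + ∫ s in (0 : ℝ)..t, a (t - s) • A (S s x))
    (f : ℝ → X) (hf : Integrable f) (hfD : ∀ᵐ t, f t ∈ D) (hAf : Integrable fun t => A (f t)) :
    (∀ t : ℝ, IntegrableOn (fun s => S (t - s) (f s)) (Iic t)) ∧
    (∀ t : ℝ, (∫ s in Iic t, S (t - s) (f s)) ∈ D) ∧
    (∀ t : ℝ, (∫ s in Iic t, S (t - s) (f s)) =
      ∫ s in Iic t, a (t - s) • (A (∫ u in Iic s, S (s - u) (f u)) + f s)) := by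
  let B := linearPMapOfLinearOn D A hA_add hA_smul
  have hB : B.IsClosed := isClosed_linearPMapOfLinearOn hA_closed
  have hB_graph {p : X × X} : p ∈ B.graph ↔ p.1 ∈ D ∧ A p.1 = p.2 := mem_graph_linearPMapOfLinearOn
  have hT := hS.indicator measurableSet_Ici
  have hb := ha.integrable_indicator measurableSet_Ici
  have hT_graph : ∀ p ∈ B.graph, ∀ t,
      ((Ici 0).indicator S t p.1, (Ici 0).indicator S t p.2) ∈ B.graph := by
    intro p hp t
    obtain ⟨hpD, hAp⟩ := hB_graph.1 hp
    exact indicator_apply_prodMk_mem (fun t ht => hB_graph.2 (hAp ▸ hcomm p.1 hpD t ht)) t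
  have hT_res : ∀ p ∈ B.graph, ∀ᵐ t, (Ici 0).indicator S t p.1 =
      (Ici 0).indicator a t • p.1 +
        ∫ s, (Ici 0).indicator a (t - s) • (Ici 0).indicator S s p.2 := by
    intro p hp
    obtain ⟨hpD, hAp⟩ := hB_graph.1 hp
    exact ae_resolvent_indicator_Ici
      (hAp ▸ ae_resolvent_of_commute (hcomm p.1 hpD · · |>.2) (hres p.1 hpD))
  have hf_graph : ∀ᵐ s, (f s, A (f s)) ∈ B.graph := hfD.mono fun s hs => hB_graph.2 ⟨hs, rfl⟩
  have x_eq (t : ℝ) :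
      ∫ s in Iic t, S (t - s) (f s) = ∫ s, (Ici 0).indicator S (t - s) (f s) := by
    rw [indicator_Ici_sub_apply, integral_indicator measurableSet_Iic]
  have x_graph (t : ℝ) := hB_graph.1 (hT.integral_apply_sub_mem hB hT_graph hf hAf hf_graph t)
  simp only [x_eq]
  refine ⟨fun t => ?_, fun t => (x_graph t).1, fun t => ?_⟩
  · rw [← integrable_indicator_iff measurableSet_Iic, ← indicator_Ici_sub_apply]
    exact (hT.comp_sub_left t).integrable_apply hf
  · rw [hT.integral_apply_sub_eq_of_resolvent hb hT_res hf hAf hf_graph,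
      ← integral_indicator measurableSet_Iic, ← indicator_Ici_sub_smul]
    simp only [(x_graph _).2]

/-- deterministic part of Proposition 4.2. Let `X` be a Banach space,
`A` a closed linear operator with domain `D ⊆ X`, `a ∈ L¹(ℝ₊)` a scalar kernel not a.e.
zero, and `(S(t))_{t≥0}` an integral resolvent with generator `A` and kernel `a`:
`t ↦ S(t)x` is strongly measurable, `‖S(t)‖ ≤ φ(t)` a.e. with `φ ∈ L¹(ℝ₊)` nonincreasing,
`S(t)` commutes with `A` on `D`, and
`S(t)x = a(t)x + ∫₀ᵗ a(t−s) A S(s)x ds` for `x ∈ D` and a.e. `t ≥ 0`. If `f ∈ L¹(ℝ,X)`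
takes values in `D` with `A∘f ∈ L¹(ℝ,X)`, then `x(t) = ∫_{−∞}^t S(t−s) f(s) ds` is well
defined, takes values in `D`, and solves the Volterra equation
`x(t) = ∫_{−∞}^t a(t−s)[A x(s) + f(s)] ds`. -/
theorem integral_resolvent_solves_volterra
    {X : Type*} [NormedAddCommGroup X] [NormedSpace ℝ X] [CompleteSpace X]
    (D : Submodule ℝ X) (A : X → X)
    (hA_add : ∀ x ∈ D, ∀ y ∈ D, A (x + y) = A x + A y)
    (hA_smul : ∀ (c : ℝ), ∀ x ∈ D, A (c • x) = c • A x)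
    (hA_closed : ∀ (u : ℕ → X) (x y : X), (∀ n, u n ∈ D) →
      Tendsto u atTop (𝓝 x) → Tendsto (fun n => A (u n)) atTop (𝓝 y) →
      x ∈ D ∧ A x = y)
    (a : ℝ → ℝ) (ha : IntegrableOn a (Ici 0))
    (ha0 : ¬ (∀ᵐ t ∂(volume.restrict (Ici (0:ℝ))), a t = 0))
    (S : ℝ → X →L[ℝ] X)
    (hSmeas : ∀ x : X, AEStronglyMeasurable (fun t => S t x) (volume.restrict (Ici 0)))
    (φ : ℝ → ℝ) (hφ0 : ∀ t ∈ Ici (0:ℝ), 0 ≤ φ t) (hφmono : AntitoneOn φ (Ici 0))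
    (hφint : IntegrableOn φ (Ici 0))
    (hSbound : ∀ᵐ t ∂(volume.restrict (Ici (0:ℝ))), ‖S t‖ ≤ φ t)
    (hcomm : ∀ x ∈ D, ∀ t ≥ (0:ℝ), S t x ∈ D ∧ A (S t x) = S t (A x))
    (hres : ∀ x ∈ D, ∀ᵐ t ∂(volume.restrict (Ici (0:ℝ))),
      S t x = a t • x + ∫ s in (0:ℝ)..t, a (t - s) • A (S s x))
    (f : ℝ → X) (hf : Integrable f) (hfD : ∀ t, f t ∈ D)
    (hAf : Integrable fun t => A (f t)) :
    (∀ t : ℝ, IntegrableOn (fun s => S (t - s) (f s)) (Iic t)) ∧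
    (∀ t : ℝ, (∫ s in Iic t, S (t - s) (f s)) ∈ D) ∧
    (∀ t : ℝ, (∫ s in Iic t, S (t - s) (f s)) =
      ∫ s in Iic t, a (t - s) • (A (∫ u in Iic s, S (s - u) (f u)) + f s)) := by
  exact integral_resolvent_solves_volterra_general D A hA_add hA_smul hA_closed a ha S _
    (essBoundedFamily_of_antitoneOn hSmeas (hφ0 0 self_mem_Ici) hφmono hSbound) hcomm hres f hf
    (.of_forall hfD) hAf
end
end
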